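/- arXiv:2507.22284 — 2 statements merged into one kernel-verified Lean document; each statement's English description precedes it below -/
import Mathlib

section
/- If P and Q are polytopes lying in orthogonal complementary subspaces of R^d, each containing the origin in its relative interior, with dim P = p and dim Q = q and p + q = d, then the number of full flags of the convex hull conv(P ∪ Q) satisfies flags(conv(P ∪ Q)) = flags(P) · flags(Q) · binom(d, p). -/
open RealInnerProductSpace

noncomputable section

abbrev Euc (d : ℕ) := EuclideanSpace ℝ (Fin d)

/-- A polytope is the convex hull of a finite set of points. -/
def IsPolytope {d : ℕ} (P : Set (Euc d)) : Prop :=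
  ∃ V : Set (Euc d), V.Finite ∧ P = convexHull ℝ V

/-- The dimension of a subset: the rank of its vector span (direction of its affine hull). -/
noncomputable def sdim {d : ℕ} (F : Set (Euc d)) : ℕ :=
  Module.finrank ℝ (vectorSpan ℝ F)

/-- A full flag of a `k`-dimensional polytope `P`: a chain of nonempty faces,
one in each dimension `0, …, k-1`.  For indices `≥ k` the face is `P` itself by convention. -/
structure FullFlag {d : ℕ} (P : Set (Euc d)) (k : ℕ) where
  face : ℕ → Set (Euc d)
  exposed : ∀ i < k, IsExposed ℝ P (face i)
  nonempty : ∀ i < k, (face i).Nonempty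
  dim_eq : ∀ i < k, sdim (face i) = i
  chain : ∀ i j : ℕ, i < j → j < k → face i ⊆ face j
  top : ∀ i, k ≤ i → face i = P

/-!
Every nonempty proper face of `P`, `Q` or `P ∨ Q` is exposed by a functional with maximum `1`,
because the origin is in the relative interior. As `P` and `Q` span independent subspaces, such
functionals on `P` and on `Q` combine freely, so the proper faces of `P ∨ Q`, including `∅`, are
the pairs of proper faces of `P` and `Q`; ranks (dimension plus one) add up. A full flag of `P ∨ Q`
is therefore a saturated chain in a product of graded posets, which amounts to a saturated
chain in each factor and a lattice path from `(0, 0)` to `(p, q)` recording the order in which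
the two chains are traversed. There are `binom(p + q, p)` such paths.
-/

section RankedFlag

/-- A saturated chain of length `k` in an order with rank function `ρ`, starting in rank `0`: it has
one element of each rank `i ≤ k`, and these increase with `i`. -/
structure RankedFlag {α : Type*} [Preorder α] (ρ : α → ℕ) (k : ℕ) extends Fin (k + 1) →o α where
  rank_eq' : ∀ i, ρ (toFun i) = i

/-- The rank function of a product of ranked orders. -/
def prodRank {α β : Type*} (ρ : α → ℕ) (σ : β → ℕ) (x : α × β) : ℕ :=
  ρ x.1 + σ x.2

/-- A lattice path from `(0, 0)` to `(p, q)` by unit steps to the right and upwards, encoded as a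
saturated chain in the grid `{0, …, p} × {0, …, q}`. -/
abbrev LatticePath (p q : ℕ) : Type :=
  RankedFlag (prodRank (Fin.val : Fin (p + 1) → ℕ) (Fin.val : Fin (q + 1) → ℕ)) (p + q)

variable {α β : Type*} {p q k : ℕ}

namespace RankedFlag

section Preorder

variable [Preorder α] [Preorder β] {ρ : α → ℕ} {σ : β → ℕ}

instance : FunLike (RankedFlag ρ k) (Fin (k + 1)) α where
  coe c := c.toFun
  coe_injective c c' h := by
    cases c
    cases c'
    congr
    exact OrderHom.ext _ _ h

instance : OrderHomClass (RankedFlag ρ k) (Fin (k + 1)) α where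
  map_rel c _ _ h := c.monotone' h

theorem rank_eq (c : RankedFlag ρ k) (i : Fin (k + 1)) : ρ (c i) = i :=
  c.rank_eq' i

/-- Transport of ranked flags along a rank-preserving order isomorphism. -/
def congr (e : α ≃o β) (h : ∀ a, σ (e a) = ρ a) : RankedFlag ρ k ≃ RankedFlag σ k where
  toFun c := ⟨(e : α →o β).comp c, fun i => (h _).trans (c.rank_eq i)⟩
  invFun c := ⟨(e.symm : β →o α).comp c, fun i =>
    (h _).symm.trans ((congrArg σ (e.apply_symm_apply (c i))).trans (c.rank_eq i))⟩
  left_inv c := DFunLike.ext _ _ fun i => e.symm_apply_apply (c i)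
  right_inv c := DFunLike.ext _ _ fun i => e.apply_symm_apply (c i)

/-- The flag of a product which follows the flags `c` and `e` of its factors in the order prescribed
by the lattice path `π`. -/
def shuffle (c : RankedFlag ρ p) (e : RankedFlag σ q) (π : LatticePath p q) :
    RankedFlag (prodRank ρ σ) (p + q) where
  toOrderHom := (c.toOrderHom.prodMap e.toOrderHom).comp π.toOrderHom
  rank_eq' i := (congrArg₂ (· + ·) (c.rank_eq (π i).1) (e.rank_eq (π i).2)).trans (π.rank_eq i)

/-- The lattice path traced by the ranks of the two components of a flag of a product. -/
def toLatticePath (hρ : Monotone ρ) (hσ : Monotone σ) (hρp : ∀ a, ρ a ≤ p) (hσq : ∀ b, σ b ≤ q)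
    (z : RankedFlag (prodRank ρ σ) (p + q)) : LatticePath p q where
  toFun i := (⟨ρ (z i).1, Nat.lt_succ_of_le (hρp _)⟩, ⟨σ (z i).2, Nat.lt_succ_of_le (hσq _)⟩)
  monotone' _ _ hij := ⟨hρ (OrderHomClass.mono z hij).1, hσ (OrderHomClass.mono z hij).2⟩
  rank_eq' := z.rank_eq

end Preorder

theorem exists_forall_apply_eq_of_surjective [PartialOrder α] {ρ : α → ℕ} (hρ : StrictMono ρ)
    {ι : Type*} [LinearOrder ι] {x : ι → α} (hx : Monotone x) {f : ι → Fin (k + 1)}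
    (hf : f.Surjective) (hρx : ∀ i, ρ (x i) = f i) : ∃ c : RankedFlag ρ k, ∀ i, c (f i) = x i := by
  have le_of_rank_le {i j : ι} (h : f i ≤ f j) : x i ≤ x j := by
    rcases le_total i j with hij | hji
    · exact hx hij
    · refine (eq_of_le_of_not_lt (hx hji) fun hlt => ?_).ge
      have := hρ hlt
      rw [hρx, hρx] at this
      exact this.not_ge h
  obtain ⟨s, hs⟩ := hf.hasRightInverse
  refine ⟨⟨⟨x ∘ s, fun a b hab => le_of_rank_le ?_⟩, fun a => ?_⟩, fun i => ?_⟩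
  · rwa [hs, hs]
  · exact (hρx _).trans (congrArg Fin.val (hs a))
  · exact (le_of_rank_le (hs _).le).antisymm (le_of_rank_le (hs _).ge)

end RankedFlag

theorem exists_apply_eq_of_add_eq {n j : ℕ} {f g : Fin (n + 1) → ℕ} (hg : Monotone g)
    (hfg : ∀ i, f i + g i = i) (hj : j ≤ f (Fin.last n)) : ∃ i, f i = j := by
  suffices ∀ i, j ≤ f i → ∃ i', f i' = j from this _ hj
  intro i
  induction i using Fin.induction with
  | zero => exact fun hj => ⟨0, by have := hfg 0; simp only [Fin.val_zero] at this; omega⟩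
  | succ i ih =>
    intro hj
    have f_succ_le : f i.succ ≤ f i.castSucc + 1 := by
      have h_succ := hfg i.succ
      have h_castSucc := hfg i.castSucc
      have := hg i.castSucc_le_succ
      simp only [Fin.val_succ, Fin.val_castSucc] at h_succ h_castSucc
      omega
    rcases hj.lt_or_eq with hlt | heq
    · exact ih (by omega)
    · exact ⟨i.succ, heq.symm⟩

theorem natCount_add_natCount_not (P : ℕ → Prop) [DecidablePred P] (n : ℕ) :
    Nat.count P n + Nat.count (fun i => ¬P i) n = n := by
  simp only [Nat.count_eq_card_filter_range, Finset.card_filter_add_card_filter_not,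
    Finset.card_range]

theorem natCount_mem_of_subset_range {S : Finset ℕ} {n : ℕ} (h : S ⊆ Finset.range n) :
    Nat.count (· ∈ S) n = S.card := by
  rw [Nat.count_eq_card_filter_range, Finset.filter_mem_eq_inter, Finset.inter_eq_right.2 h]

namespace LatticePath

theorem fst_add_snd (π : LatticePath p q) (i : Fin (p + q + 1)) :
    ((π i).1 : ℕ) + (π i).2 = i :=
  π.rank_eq i

theorem monotone_fst (π : LatticePath p q) : Monotone fun i => ((π i).1 : ℕ) :=
  fun _ _ h => (OrderHomClass.mono π h).1

theorem monotone_snd (π : LatticePath p q) : Monotone fun i => ((π i).2 : ℕ) :=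
  fun _ _ h => (OrderHomClass.mono π h).2

theorem apply_last (π : LatticePath p q) : π (Fin.last _) = (Fin.last p, Fin.last q) := by
  have := π.fst_add_snd (Fin.last _)
  simp only [Fin.val_last] at this
  exact Prod.ext (Fin.ext (show _ = p by omega)) (Fin.ext (show _ = q by omega))

theorem surjective_fst (π : LatticePath p q) : Function.Surjective fun i => (π i).1 := fun j =>
  (exists_apply_eq_of_add_eq π.monotone_snd π.fst_add_snd
    (by simpa only [apply_last, Fin.val_last] using j.is_le)).imp fun _ => Fin.ext

theorem surjective_snd (π : LatticePath p q) : Function.Surjective fun i => (π i).2 := fun j =>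
  (exists_apply_eq_of_add_eq π.monotone_fst (fun i => (add_comm _ _).trans (π.fst_add_snd i))
    (by simpa only [apply_last, Fin.val_last] using j.is_le)).imp fun _ => Fin.ext

theorem ext_fst {π π' : LatticePath p q} (h : ∀ i, ((π i).1 : ℕ) = (π' i).1) : π = π' := by
  refine DFunLike.ext _ _ fun i => Prod.ext (Fin.ext (h i)) (Fin.ext ?_)
  have := π.fst_add_snd i
  have := π'.fst_add_snd i
  have := h i
  omega

open Finset

/-- The lattice path whose `i`-th step goes to the right if `i ∈ S` and upwards otherwise. -/
def ofFinset (S : powersetCard p (range (p + q))) : LatticePath p q :=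
  have count_mem : Nat.count (· ∈ S.1) (p + q) = p :=
    have hS := mem_powersetCard.1 S.2
    (natCount_mem_of_subset_range hS.1).trans hS.2
  have count_add := natCount_add_natCount_not (· ∈ S.1)
  have lt_p (i : Fin (p + q + 1)) : Nat.count (· ∈ S.1) i < p + 1 := by
    have := Nat.count_monotone (· ∈ S.1) i.is_le
    omega
  have lt_q (i : Fin (p + q + 1)) : Nat.count (· ∉ S.1) i < q + 1 := by
    have := Nat.count_monotone (· ∉ S.1) i.is_le
    have := count_add (p + q)
    omega
  { toFun := fun i => (⟨_, lt_p i⟩, ⟨_, lt_q i⟩)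
    monotone' := fun _ _ hij => ⟨Nat.count_monotone _ hij, Nat.count_monotone _ hij⟩
    rank_eq' := fun i => count_add i }

theorem ofFinset_apply_fst (S : powersetCard p (range (p + q))) (i : Fin (p + q + 1)) :
    ((ofFinset S i).1 : ℕ) = Nat.count (· ∈ S.1) i :=
  rfl

theorem ofFinset_injective :
    Function.Injective (ofFinset : powersetCard p (range (p + q)) → LatticePath p q) := by
  intro S T h
  have count_eq (i : ℕ) (hi : i ≤ p + q) : Nat.count (· ∈ S.1) i = Nat.count (· ∈ T.1) i := by
    have := congrArg (fun π : LatticePath p q => ((π ⟨i, Nat.lt_succ_of_le hi⟩).1 : ℕ)) h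
    simpa only [ofFinset_apply_fst] using this
  have mem_iff {i : ℕ} (hi : i < p + q) : i ∈ S.1 ↔ i ∈ T.1 := by
    rw [← Nat.count_succ_eq_succ_count_iff (p := (· ∈ S.1)), count_eq _ hi, count_eq _ hi.le,
      Nat.count_succ_eq_succ_count_iff]
  have lt_of_mem (S : powersetCard p (range (p + q))) {i} (hi : i ∈ S.1) : i < p + q :=
    mem_range.1 ((mem_powersetCard.1 S.2).1 hi)
  exact Subtype.ext <| Finset.ext fun i =>
    ⟨fun hi => (mem_iff (lt_of_mem S hi)).1 hi, fun hi => (mem_iff (lt_of_mem T hi)).2 hi⟩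

theorem ofFinset_surjective :
    Function.Surjective (ofFinset : powersetCard p (range (p + q)) → LatticePath p q) := by
  intro π
  let S : Finset ℕ :=
    {i : Fin (p + q) | (π i.castSucc).1 < (π i.succ).1}.toFinset.map Fin.valEmbedding
  have mem_S (i : Fin (p + q)) : (i : ℕ) ∈ S ↔ (π i.castSucc).1 < (π i.succ).1 := by
    simp [S, Fin.val_inj]
  have S_subset : S ⊆ range (p + q) := by
    intro i hi
    obtain ⟨j, -, rfl⟩ := mem_map.1 hi
    exact mem_range.2 j.is_lt
  have count_S (i : Fin (p + q + 1)) : Nat.count (· ∈ S) i = (π i).1 := by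
    induction i using Fin.induction with
    | zero =>
      have := π.fst_add_snd 0
      simp only [Fin.val_zero, Nat.count_zero] at this ⊢
      omega
    | succ i ih =>
      have h_succ := π.fst_add_snd i.succ
      have h_castSucc := π.fst_add_snd i.castSucc
      have fst_le := π.monotone_fst i.castSucc_le_succ
      have snd_le := π.monotone_snd i.castSucc_le_succ
      simp only [Fin.val_succ, Fin.val_castSucc, Nat.count_succ, mem_S, Fin.lt_def]
        at h_succ h_castSucc ih fst_le snd_le ⊢
      split_ifs <;> omega
  have card_S : S.card = p := by
    rw [← natCount_mem_of_subset_range S_subset]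
    simpa only [apply_last, Fin.val_last] using count_S (Fin.last _)
  exact ⟨⟨S, mem_powersetCard.2 ⟨S_subset, card_S⟩⟩, ext_fst count_S⟩

theorem mk_eq_choose : Cardinal.mk (LatticePath p q) = (p + q).choose p := by
  rw [← Cardinal.mk_congr (Equiv.ofBijective _ ⟨ofFinset_injective, ofFinset_surjective⟩),
    Cardinal.mk_coe_finset, card_powersetCard, card_range]

end LatticePath

namespace RankedFlag

variable [PartialOrder α] [PartialOrder β] {ρ : α → ℕ} {σ : β → ℕ}

theorem shuffle_injective : Function.Injective
    fun x : RankedFlag ρ p × RankedFlag σ q × LatticePath p q => x.1.shuffle x.2.1 x.2.2 := by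
  rintro ⟨c, e, π⟩ ⟨c', e', π'⟩ h
  have h_apply (i) : c (π i).1 = c' (π' i).1 ∧ e (π i).2 = e' (π' i).2 :=
    Prod.ext_iff.1 (DFunLike.congr_fun h i)
  obtain rfl : π = π' := LatticePath.ext_fst fun i => by
    rw [← c.rank_eq, ← c'.rank_eq, (h_apply i).1]
  have hc : c = c' := DFunLike.coe_injective <|
    π.surjective_fst.injective_comp_right <| funext fun i => (h_apply i).1
  have he : e = e' := DFunLike.coe_injective <|
    π.surjective_snd.injective_comp_right <| funext fun i => (h_apply i).2
  rw [hc, he]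

theorem shuffle_surjective (hρ : StrictMono ρ) (hσ : StrictMono σ) (hρp : ∀ a, ρ a ≤ p)
    (hσq : ∀ b, σ b ≤ q) : Function.Surjective
    fun x : RankedFlag ρ p × RankedFlag σ q × LatticePath p q => x.1.shuffle x.2.1 x.2.2 := by
  intro z
  let π := z.toLatticePath hρ.monotone hσ.monotone hρp hσq
  obtain ⟨c, hc⟩ := exists_forall_apply_eq_of_surjective hρ
    (fun i j h => (OrderHomClass.mono z h).1) π.surjective_fst fun _ => rfl
  obtain ⟨e, he⟩ := exists_forall_apply_eq_of_surjective hσ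
    (fun i j h => (OrderHomClass.mono z h).2) π.surjective_snd fun _ => rfl
  exact ⟨(c, e, π), DFunLike.ext _ _ fun i => Prod.ext (hc i) (he i)⟩

/-- A flag of a product of ranked orders is the same as a flag of each factor together with a
lattice path which prescribes in what order these two are traversed. -/
def shuffleEquiv (hρ : StrictMono ρ) (hσ : StrictMono σ) (hρp : ∀ a, ρ a ≤ p)
    (hσq : ∀ b, σ b ≤ q) : RankedFlag ρ p × RankedFlag σ q × LatticePath p q ≃
      RankedFlag (prodRank ρ σ) (p + q) :=
  Equiv.ofBijective _ ⟨shuffle_injective, shuffle_surjective hρ hσ hρp hσq⟩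

end RankedFlag

end RankedFlag

section Face

theorem sep_inter_of_subset {α : Type*} {s t : Set α} (h : s ⊆ t) (p : α → Prop) :
    {x ∈ t | p x} ∩ s = {x ∈ s | p x} :=
  Set.ext fun _ => ⟨fun hx => ⟨hx.2, hx.1.2⟩, fun hx => ⟨⟨h hx.1, hx.2⟩, hx.1⟩⟩

open Module Submodule

section DivisionRing

variable {K E : Type*} [DivisionRing K] [AddCommGroup E] [Module K E]

theorem finrank_span_eq_finrank_vectorSpan_of_zero_mem {P : Set E} (h : (0 : E) ∈ P) :
    finrank K (span K P) = finrank K (vectorSpan K P) := by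
  have image_vsub_zero : (· -ᵥ (0 : E)) '' P = P := by
    simp only [vsub_eq_sub, sub_zero, Set.image_id']
  rw [vectorSpan_eq_span_vsub_set_right K h, image_vsub_zero]

theorem finrank_span_eq_finrank_vectorSpan_add_one [FiniteDimensional K E] {F : Set E}
    (hF : F.Nonempty) (l : E →ₗ[K] K) (hl : ∀ x ∈ F, l x = 1) :
    finrank K (span K F) = finrank K (vectorSpan K F) + 1 := by
  obtain ⟨x₀, hx₀⟩ := hF
  have span_eq : span K F = vectorSpan K F ⊔ span K {x₀} := by
    refine le_antisymm (span_le.2 fun y hy => ?_) (sup_le (span_le.2 ?_) (span_mono (by simpa)))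
    · rw [← sub_add_cancel y x₀]
      exact add_mem_sup (vsub_mem_vectorSpan K hy hx₀) (mem_span_singleton_self x₀)
    · rintro _ ⟨a, ha, b, hb, rfl⟩
      exact sub_mem (subset_span ha) (subset_span hb)
  have vectorSpan_le_ker : vectorSpan K F ≤ l.ker := by
    refine span_le.2 ?_
    rintro _ ⟨a, ha, b, hb, rfl⟩
    simp [hl a ha, hl b hb]
  have x₀_notMem : x₀ ∉ vectorSpan K F := fun h =>
    one_ne_zero ((hl x₀ hx₀).symm.trans (vectorSpan_le_ker h))
  rw [span_eq, finrank_sup_span_singleton x₀_notMem]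

theorem finrank_span_union [FiniteDimensional K E] {F G : Set E}
    (h : Disjoint (span K F) (span K G)) :
    finrank K (span K (F ∪ G)) = finrank K (span K F) + finrank K (span K G) := by
  rw [← finrank_sup_add_finrank_inf_eq, h.eq_bot, finrank_bot, add_zero, span_union]

theorem exists_linearMap_eq_eq {M : Type*} [AddCommGroup M] [Module K M] {U V : Submodule K E}
    (h : Disjoint U V) (l m : E →ₗ[K] M) :
    ∃ n : E →ₗ[K] M, (∀ x ∈ U, n x = l x) ∧ ∀ x ∈ V, n x = m x := by
  obtain ⟨W, hUW, hWV⟩ := h.exists_isCompl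
  refine ⟨LinearMap.ofIsCompl hWV (l.domRestrict W) (m.domRestrict V), fun x hx => ?_,
    fun x hx => ?_⟩
  · exact LinearMap.ofIsCompl_apply_left hWV ⟨x, hUW hx⟩
  · exact LinearMap.ofIsCompl_apply_right hWV ⟨x, hx⟩

end DivisionRing

section LinearOrderedField

variable {𝕜 E : Type*} [Field 𝕜] [LinearOrder 𝕜] [AddCommGroup E] [Module 𝕜 E]

theorem span_convexHull (R : Set E) : span 𝕜 (convexHull 𝕜 R) = span 𝕜 R :=
  le_antisymm (span_le.2 (convexHull_min subset_span (span 𝕜 R).convex))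
    (span_mono (subset_convexHull 𝕜 R))

variable [IsStrictOrderedRing 𝕜]

theorem sep_convexHull_eq {R : Set E} {l : E →ₗ[𝕜] 𝕜} {c : 𝕜} (hl : ∀ x ∈ R, l x ≤ c) :
    {x ∈ convexHull 𝕜 R | l x = c} = convexHull 𝕜 {x ∈ R | l x = c} := by
  have hull_subset : convexHull 𝕜 {x ∈ R | l x = c} ⊆ {x | l x = c} :=
    convexHull_min (fun x hx => hx.2) (convex_hyperplane l.isLinear c)
  have convex_union : Convex 𝕜 ({x | l x < c} ∪ convexHull 𝕜 {x ∈ R | l x = c}) := by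
    intro x hx y hy a b ha hb hab
    rcases ha.eq_or_lt with rfl | ha
    · simpa [(zero_add b).symm.trans hab] using hy
    rcases hb.eq_or_lt with rfl | hb
    · simpa [(add_zero a).symm.trans hab] using hx
    have le_c {z} (hz : z ∈ {x | l x < c} ∪ convexHull 𝕜 {x ∈ R | l x = c}) : l z ≤ c :=
      hz.elim (fun hz => le_of_lt hz) fun hz => (hull_subset hz).le
    have c_eq : c = a * c + b * c := by rw [← add_mul, hab, one_mul]
    by_cases hlt : l x < c ∨ l y < c
    · left
      simp only [Set.mem_ofPred_eq, map_add, map_smul, smul_eq_mul]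
      rw [c_eq]
      rcases hlt with hlt | hlt
      · exact add_lt_add_of_lt_of_le (by gcongr) (by gcongr; exact le_c hy)
      · exact add_lt_add_of_le_of_lt (by gcongr; exact le_c hx) (by gcongr)
    · rw [not_or] at hlt
      exact Or.inr (convex_convexHull 𝕜 _ (hx.resolve_left hlt.1) (hy.resolve_left hlt.2)
        ha.le hb.le hab)
  apply Set.Subset.antisymm
  · rintro x ⟨hxR, hx⟩
    refine (convexHull_min (fun y hy => ?_) convex_union hxR).resolve_left hx.not_lt
    exact (hl y hy).lt_or_eq.imp_right fun h => subset_convexHull 𝕜 _ ⟨hy, h⟩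
  · exact fun x hx => ⟨convexHull_mono (Set.sep_subset R _) hx, hull_subset hx⟩

end LinearOrderedField

variable {E : Type*} [AddCommGroup E] [Module ℝ E] [TopologicalSpace E]

/-- A proper face, possibly empty, of a set `P` containing the origin in its relative interior. The
functional exposing `F` is normalized to take the value `1` on `F`; this excludes the face `P`. -/
def IsProperFace (P F : Set E) : Prop :=
  ∃ l : E →L[ℝ] ℝ, (∀ x ∈ P, l x ≤ 1) ∧ F = {x ∈ P | l x = 1}

/-- The poset of proper faces of `P`, ordered by inclusion. -/
abbrev ProperFace (P : Set E) : Type _ :=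
  {F : Set E // IsProperFace P F}

/-- The rank of a proper face in the face lattice, one more than its dimension. It is encoded as a
linear rather than an affine dimension, so that the empty face has rank `0`. -/
def faceRank {P : Set E} (F : ProperFace P) : ℕ :=
  finrank ℝ (span ℝ F.1)

/-- The origin lies in the relative interior of `P`. This is stated dually: the origin is in `P`,
and a functional attaining its maximum over `P` at the origin is constant on `P`. -/
structure IsOriginInterior (P : Set E) : Prop where
  zero_mem : (0 : E) ∈ P
  eq_zero_of_nonpos : ∀ l : E →L[ℝ] ℝ, (∀ x ∈ P, l x ≤ 0) → ∀ x ∈ P, l x = 0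

variable {P Q R F G H S : Set E}

namespace IsProperFace

theorem empty (P : Set E) : IsProperFace P ∅ :=
  ⟨0, fun _ _ => zero_le_one, by simp⟩

theorem subset (hF : IsProperFace P F) : F ⊆ P := by
  obtain ⟨l, -, rfl⟩ := hF
  exact Set.sep_subset P _

theorem zero_notMem (hF : IsProperFace P F) : (0 : E) ∉ F := by
  obtain ⟨l, -, rfl⟩ := hF
  simp

theorem isExposed (hF : IsProperFace P F) : IsExposed ℝ P F := by
  obtain ⟨l, hl, rfl⟩ := hF
  rintro ⟨x, hxP, hx⟩
  refine ⟨l, Set.ext fun y => and_congr_right fun hy => ⟨fun h z hz => ?_, fun h => ?_⟩⟩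
  · exact (hl z hz).trans h.ge
  · exact (hl y hy).antisymm (hx.symm.le.trans (h x hxP))

theorem inter_of_subset (hF : IsProperFace P F) (hS : S ⊆ P) : IsProperFace S (F ∩ S) := by
  obtain ⟨l, hl, rfl⟩ := hF
  exact ⟨l, fun x hx => hl x (hS hx), sep_inter_of_subset hS _⟩

theorem eq_of_subset_of_span_le (hF : IsProperFace P F) (hG : IsProperFace P G) (hFG : F ⊆ G)
    (h : span ℝ G ≤ span ℝ F) : F = G := by
  obtain ⟨l, -, rfl⟩ := hF
  obtain ⟨m, -, rfl⟩ := hG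
  refine hFG.antisymm fun x hx => ⟨hx.1, ?_⟩
  have span_le_eqLocus : span ℝ {x ∈ P | l x = 1} ≤ (l : E →ₗ[ℝ] ℝ).eqLocus m :=
    span_le.2 fun y hy => hy.2.trans (hFG hy).2.symm
  exact (span_le_eqLocus (h (subset_span hx))).trans hx.2

protected theorem convexHull (hF : IsProperFace R F) :
    IsProperFace (convexHull ℝ R) (convexHull ℝ F) := by
  obtain ⟨l, hl, rfl⟩ := hF
  exact ⟨l, convexHull_min hl (convex_halfSpace_le l.isLinear 1), (sep_convexHull_eq hl).symm⟩

theorem convexHull_inter (hF : IsProperFace R F) : convexHull ℝ F ∩ R = F := by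
  refine Set.Subset.antisymm ?_ (Set.subset_inter (subset_convexHull ℝ F) hF.subset)
  obtain ⟨l, -, rfl⟩ := hF
  exact fun x hx => ⟨hx.2, convexHull_min (fun y hy => hy.2) (convex_hyperplane l.isLinear 1) hx.1⟩

theorem convexHull_inter_eq_self (hH : IsProperFace (convexHull ℝ R) H) :
    convexHull ℝ (H ∩ R) = H := by
  obtain ⟨l, hl, rfl⟩ := hH
  have hlR : ∀ x ∈ R, l x ≤ 1 := fun x hx => hl x (subset_convexHull ℝ R hx)
  rw [sep_inter_of_subset (subset_convexHull ℝ R)]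
  exact (sep_convexHull_eq hlR).symm

protected theorem finrank_span [FiniteDimensional ℝ E] (hF : IsProperFace P F) (hF' : F.Nonempty) :
    finrank ℝ (span ℝ F) = finrank ℝ (vectorSpan ℝ F) + 1 := by
  obtain ⟨l, -, rfl⟩ := hF
  exact finrank_span_eq_finrank_vectorSpan_add_one hF' l fun x hx => hx.2

end IsProperFace

namespace ProperFace

/-- A set has the same proper faces as its convex hull. -/
def convexHullEquiv (R : Set E) : ProperFace R ≃o ProperFace (convexHull ℝ R) where
  toFun F := ⟨convexHull ℝ F.1, F.2.convexHull⟩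
  invFun H := ⟨H.1 ∩ R, H.2.inter_of_subset (subset_convexHull ℝ R)⟩
  left_inv F := Subtype.ext F.2.convexHull_inter
  right_inv H := Subtype.ext H.2.convexHull_inter_eq_self
  map_rel_iff' {F G} := by
    refine ⟨fun hle => ?_, fun hle => convexHull_mono hle⟩
    change F.1 ⊆ G.1
    rw [← F.2.convexHull_inter, ← G.2.convexHull_inter]
    exact Set.inter_subset_inter_left R hle

theorem faceRank_convexHullEquiv (F : ProperFace R) : faceRank (convexHullEquiv R F) = faceRank F :=
  congrArg (fun V : Submodule ℝ E => finrank ℝ V) (span_convexHull F.1)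

variable [FiniteDimensional ℝ E]

theorem strictMono_faceRank : StrictMono (faceRank : ProperFace P → ℕ) := by
  intro F G hFG
  refine finrank_lt_finrank_of_lt ((span_mono hFG.le).lt_of_not_ge fun h => ?_)
  exact hFG.ne (Subtype.ext (F.2.eq_of_subset_of_span_le G.2 hFG.le h))

theorem faceRank_eq_zero_iff {F : ProperFace P} : faceRank F = 0 ↔ F.1 = ∅ := by
  rw [faceRank, finrank_eq_zero, span_eq_bot, Set.eq_empty_iff_forall_notMem]
  refine forall₂_congr fun x hx => ?_
  have : x ≠ 0 := fun h => F.2.zero_notMem (h ▸ hx)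
  simpa

theorem faceRank_le (hP : (0 : E) ∈ P) (F : ProperFace P) :
    faceRank F ≤ finrank ℝ (vectorSpan ℝ P) := by
  rw [← finrank_span_eq_finrank_vectorSpan_of_zero_mem hP]
  exact finrank_mono (span_mono F.2.subset)

end ProperFace

section Union

namespace IsProperFace

theorem disjoint_of_disjoint_span (hG : IsProperFace Q G)
    (h : Disjoint (span ℝ P) (span ℝ Q)) : Disjoint G P := by
  refine Set.disjoint_left.2 fun x hxG hxP => hG.zero_notMem ?_
  rwa [← disjoint_def.1 h x (subset_span hxP) (subset_span (hG.subset hxG))]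

theorem union_inter_left (hF : IsProperFace P F) (hG : IsProperFace Q G)
    (h : Disjoint (span ℝ P) (span ℝ Q)) : (F ∪ G) ∩ P = F := by
  rw [Set.union_inter_distrib_right, (hG.disjoint_of_disjoint_span h).inter_eq, Set.union_empty,
    Set.inter_eq_self_of_subset_left hF.subset]

theorem union_inter_right (hF : IsProperFace P F) (hG : IsProperFace Q G)
    (h : Disjoint (span ℝ P) (span ℝ Q)) : (F ∪ G) ∩ Q = G := by
  rw [Set.union_comm, hG.union_inter_left hF h.symm]

variable [IsTopologicalAddGroup E] [ContinuousSMul ℝ E] [T2Space E] [FiniteDimensional ℝ E]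

theorem union (hF : IsProperFace P F) (hG : IsProperFace Q G)
    (h : Disjoint (span ℝ P) (span ℝ Q)) : IsProperFace (P ∪ Q) (F ∪ G) := by
  obtain ⟨l, hl, rfl⟩ := hF
  obtain ⟨m, hm, rfl⟩ := hG
  obtain ⟨n, hnP, hnQ⟩ := exists_linearMap_eq_eq (M := ℝ) h l m
  replace hnP : ∀ x ∈ P, n x = l x := fun x hx => hnP x (subset_span hx)
  replace hnQ : ∀ x ∈ Q, n x = m x := fun x hx => hnQ x (subset_span hx)
  refine ⟨n.toContinuousLinearMap, ?_, ?_⟩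
  · rintro x (hx | hx)
    · exact (hnP x hx).trans_le (hl x hx)
    · exact (hnQ x hx).trans_le (hm x hx)
  · have sep_P : {x ∈ P | l x = 1} = {x ∈ P | n x = 1} :=
      Set.ext fun x => and_congr_right fun hx => by rw [hnP x hx]
    have sep_Q : {x ∈ Q | m x = 1} = {x ∈ Q | n x = 1} :=
      Set.ext fun x => and_congr_right fun hx => by rw [hnQ x hx]
    rw [sep_P, sep_Q]
    exact (Set.sep_union ..).symm

end IsProperFace

namespace ProperFace

variable [IsTopologicalAddGroup E] [ContinuousSMul ℝ E] [T2Space E] [FiniteDimensional ℝ E]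

/-- A proper face of `P ∪ Q` is a pair of proper faces of `P` and `Q`, if these span independent
subspaces. -/
def unionEquiv (h : Disjoint (span ℝ P) (span ℝ Q)) :
    ProperFace (P ∪ Q) ≃o ProperFace P × ProperFace Q where
  toFun H := (⟨H.1 ∩ P, H.2.inter_of_subset Set.subset_union_left⟩,
    ⟨H.1 ∩ Q, H.2.inter_of_subset Set.subset_union_right⟩)
  invFun x := ⟨x.1.1 ∪ x.2.1, x.1.2.union x.2.2 h⟩
  left_inv H := Subtype.ext <|
    (Set.inter_union_distrib_left ..).symm.trans (Set.inter_eq_self_of_subset_left H.2.subset)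
  right_inv x := Prod.ext (Subtype.ext (x.1.2.union_inter_left x.2.2 h))
    (Subtype.ext (x.1.2.union_inter_right x.2.2 h))
  map_rel_iff' {H H'} := by
    refine ⟨fun hle x hx => ?_, fun hle =>
      ⟨Set.inter_subset_inter_left P hle, Set.inter_subset_inter_left Q hle⟩⟩
    rcases H.2.subset hx with hxP | hxQ
    · exact (hle.1 ⟨hx, hxP⟩).1
    · exact (hle.2 ⟨hx, hxQ⟩).1

theorem faceRank_unionEquiv_symm (h : Disjoint (span ℝ P) (span ℝ Q))
    (x : ProperFace P × ProperFace Q) :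
    faceRank ((unionEquiv h).symm x) = faceRank x.1 + faceRank x.2 :=
  finrank_span_union (h.mono (span_mono x.1.2.subset) (span_mono x.2.2.subset))

/-- The face lattice of a free sum below its top is the product of those of the summands. -/
def freeSumEquiv (h : Disjoint (span ℝ P) (span ℝ Q)) :
    ProperFace P × ProperFace Q ≃o ProperFace (convexHull ℝ (P ∪ Q)) :=
  (unionEquiv h).symm.trans (convexHullEquiv (P ∪ Q))

theorem faceRank_freeSumEquiv (h : Disjoint (span ℝ P) (span ℝ Q))
    (x : ProperFace P × ProperFace Q) :
    faceRank (freeSumEquiv h x) = prodRank faceRank faceRank x :=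
  (faceRank_convexHullEquiv _).trans (faceRank_unionEquiv_symm h x)

end ProperFace

end Union

namespace IsOriginInterior

theorem of_zero_mem_intrinsicInterior [IsTopologicalAddGroup E] [ContinuousSMul ℝ E]
    (h : (0 : E) ∈ intrinsicInterior ℝ P) : IsOriginInterior P := by
  refine ⟨intrinsicInterior_subset h, fun l hl x hx => (hl x hx).antisymm ?_⟩
  have h0 : (0 : E) ∈ affineSpan ℝ P := subset_affineSpan ℝ P (intrinsicInterior_subset h)
  let line : ℝ → affineSpan ℝ P := fun t =>
    ⟨AffineMap.lineMap 0 x t, AffineMap.lineMap_mem t h0 (subset_affineSpan ℝ P hx)⟩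
  have line_continuous : Continuous line := AffineMap.lineMap_continuous.subtype_mk _
  have line_mem : ∀ᶠ t in nhds 0, (line t : E) ∈ P := by
    obtain ⟨y, hy, hy0⟩ := h
    have line_zero : line 0 = y := Subtype.ext (by simp [line, hy0])
    exact line_continuous.continuousAt.eventually_mem
      (line_zero ▸ mem_interior_iff_mem_nhds.1 hy)
  obtain ⟨t, ht, ht0⟩ := ((line_mem.filter_mono nhdsWithin_le_nhds).and
    (self_mem_nhdsWithin (s := Set.Iio (0 : ℝ)))).exists
  have : t * l x ≤ 0 := by simpa [line, AffineMap.lineMap_apply] using hl _ ht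
  exact nonneg_of_mul_nonpos_right this ht0

theorem convexHull_union (hP : IsOriginInterior P) (hQ : IsOriginInterior Q) :
    IsOriginInterior (convexHull ℝ (P ∪ Q)) := by
  have subset_hull := subset_convexHull ℝ (P ∪ Q)
  refine ⟨subset_hull (Or.inl hP.zero_mem), fun l hl => ?_⟩
  refine convexHull_min ?_ (convex_hyperplane l.isLinear 0)
  exact Set.union_subset (hP.eq_zero_of_nonpos l fun x hx => hl x (subset_hull (Or.inl hx)))
    (hQ.eq_zero_of_nonpos l fun x hx => hl x (subset_hull (Or.inr hx)))

theorem isProperFace_of_isExposed (hP : IsOriginInterior P) (hF : IsExposed ℝ P F)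
    (hF' : F.Nonempty) (hFP : F ≠ P) : IsProperFace P F := by
  obtain ⟨l, rfl⟩ := hF hF'
  obtain ⟨x, hxP, hx⟩ := hF'
  have l_eq_iff {y} (hy : y ∈ P) : (∀ z ∈ P, l z ≤ l y) ↔ l y = l x :=
    ⟨fun h => (hx y hy).antisymm (h x hxP), fun h z hz => (hx z hz).trans h.ge⟩
  have l_pos : 0 < l x := by
    refine lt_of_le_of_ne (by simpa using hx 0 hP.zero_mem) fun h0 => hFP ?_
    have l_eq_zero := hP.eq_zero_of_nonpos l (h0 ▸ hx)
    exact Set.sep_eq_self_iff_mem_true.2 fun y hy z hz => by rw [l_eq_zero y hy, l_eq_zero z hz]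
  refine ⟨(l x)⁻¹ • l, fun y hy => ?_, Set.ext fun y => and_congr_right fun hy => ?_⟩
  · simpa [inv_mul_le_iff₀ l_pos] using hx y hy
  · simp [l_eq_iff hy, inv_mul_eq_one₀ l_pos.ne', eq_comm]

end IsOriginInterior

end Face

section FullFlag

variable {d k p q : ℕ} {P Q : Set (Euc d)}

namespace FullFlag

theorem ext_of_lt {f g : FullFlag P k} (h : ∀ i < k, f.face i = g.face i) : f = g := by
  have face_eq : f.face = g.face := funext fun i =>
    (lt_or_ge i k).elim (h i) fun hi => (f.top i hi).trans (g.top i hi).symm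
  cases f
  cases g
  cases face_eq
  rfl

theorem isProperFace (f : FullFlag P k) (hP : IsOriginInterior P) (hk : sdim P = k) {i : ℕ}
    (hi : i < k) : IsProperFace P (f.face i) := by
  refine hP.isProperFace_of_isExposed (f.exposed i hi) (f.nonempty i hi) fun h => hi.ne ?_
  rw [← f.dim_eq i hi, h, hk]

/-- The proper faces of a full flag, preceded by the empty face. -/
def toRankedFlag (f : FullFlag P k) (hP : IsOriginInterior P) (hk : sdim P = k) :
    RankedFlag (faceRank : ProperFace P → ℕ) k where
  toFun := Fin.cases ⟨∅, IsProperFace.empty P⟩ fun i => ⟨f.face i, f.isProperFace hP hk i.is_lt⟩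
  monotone' i j hij := by
    cases i using Fin.cases with
    | zero => exact Set.empty_subset _
    | succ i =>
      cases j using Fin.cases with
      | zero => exact absurd hij (Fin.succ_pos i).not_ge
      | succ j =>
        rcases (Fin.succ_le_succ_iff.1 hij).eq_or_lt with rfl | hlt
        · exact le_rfl
        · exact f.chain i j hlt j.is_lt
  rank_eq' i := by
    cases i using Fin.cases with
    | zero => exact ProperFace.faceRank_eq_zero_iff.2 rfl
    | succ i =>
      refine ((f.isProperFace hP hk i.is_lt).finrank_span (f.nonempty i i.is_lt)).trans ?_
      exact congrArg (· + 1) (f.dim_eq i i.is_lt)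

/-- The full flag obtained from a saturated chain of proper faces by omitting the empty face. -/
def ofRankedFlag (c : RankedFlag (faceRank : ProperFace P → ℕ) k) : FullFlag P k :=
  have nonempty (i : Fin k) : (c i.succ).1.Nonempty := by
    rw [Set.nonempty_iff_ne_empty, Ne, ← ProperFace.faceRank_eq_zero_iff, c.rank_eq]
    exact Nat.succ_ne_zero i
  { face := fun i => if h : i < k then (c (Fin.succ ⟨i, h⟩)).1 else P
    exposed := fun i hi => by
      rw [dif_pos hi]
      exact (c _).2.isExposed
    nonempty := fun i hi => by
      rw [dif_pos hi]
      exact nonempty ⟨i, hi⟩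
    dim_eq := fun i hi => by
      rw [dif_pos hi]
      exact Nat.succ_injective (((c _).2.finrank_span (nonempty ⟨i, hi⟩)).symm.trans (c.rank_eq _))
    chain := fun i j hij hj => by
      rw [dif_pos hj, dif_pos (hij.trans hj)]
      exact OrderHomClass.mono c (Fin.succ_le_succ_iff.2 hij.le)
    top := fun i hi => dif_neg hi.not_gt }

/-- A full flag is a saturated chain of proper faces. -/
def equivRankedFlag (hP : IsOriginInterior P) (hk : sdim P = k) :
    FullFlag P k ≃ RankedFlag (faceRank : ProperFace P → ℕ) k where
  toFun f := f.toRankedFlag hP hk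
  invFun := ofRankedFlag
  left_inv f := ext_of_lt fun i hi => dif_pos hi
  right_inv c := DFunLike.ext _ _ fun i => Subtype.ext <| by
    cases i using Fin.cases with
    | zero => exact (ProperFace.faceRank_eq_zero_iff.1 (c.rank_eq 0)).symm
    | succ i => exact dif_pos i.is_lt

end FullFlag

theorem sdim_convexHull_union (hP : (0 : Euc d) ∈ P) (hQ : (0 : Euc d) ∈ Q)
    (h : Disjoint (Submodule.span ℝ P) (Submodule.span ℝ Q)) :
    sdim (convexHull ℝ (P ∪ Q)) = sdim P + sdim Q := by
  have zero_mem_hull : (0 : Euc d) ∈ convexHull ℝ (P ∪ Q) := subset_convexHull ℝ _ (Or.inl hP)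
  simp only [sdim, ← finrank_span_eq_finrank_vectorSpan_of_zero_mem, zero_mem_hull, hP, hQ]
  rw [span_convexHull, finrank_span_union h]

/-- Stated in cardinals, since `P` and `Q` may have infinitely many flags. -/
theorem stmt_4_general (h : Disjoint (Submodule.span ℝ P) (Submodule.span ℝ Q))
    (hP0 : (0 : Euc d) ∈ intrinsicInterior ℝ P) (hQ0 : (0 : Euc d) ∈ intrinsicInterior ℝ Q)
    (hp : sdim P = p) (hq : sdim Q = q) :
    Cardinal.mk (FullFlag (convexHull ℝ (P ∪ Q)) (p + q))
      = Cardinal.mk (FullFlag P p) * Cardinal.mk (FullFlag Q q) * (p + q).choose p := by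
  have hP := IsOriginInterior.of_zero_mem_intrinsicInterior hP0
  have hQ := IsOriginInterior.of_zero_mem_intrinsicInterior hQ0
  have hpq : sdim (convexHull ℝ (P ∪ Q)) = p + q :=
    hp ▸ hq ▸ sdim_convexHull_union hP.zero_mem hQ.zero_mem h
  have flagsEquiv : FullFlag (convexHull ℝ (P ∪ Q)) (p + q) ≃
      FullFlag P p × FullFlag Q q × LatticePath p q :=
    calc FullFlag (convexHull ℝ (P ∪ Q)) (p + q)
      _ ≃ RankedFlag (faceRank : ProperFace (convexHull ℝ (P ∪ Q)) → ℕ) (p + q) :=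
        FullFlag.equivRankedFlag (hP.convexHull_union hQ) hpq
      _ ≃ RankedFlag (prodRank faceRank faceRank) (p + q) :=
        (RankedFlag.congr (ProperFace.freeSumEquiv h) (ProperFace.faceRank_freeSumEquiv h)).symm
      _ ≃ RankedFlag faceRank p × RankedFlag faceRank q × LatticePath p q :=
        (RankedFlag.shuffleEquiv ProperFace.strictMono_faceRank ProperFace.strictMono_faceRank
          (fun F => (F.faceRank_le hP.zero_mem).trans hp.le)
          fun G => (G.faceRank_le hQ.zero_mem).trans hq.le).symm
      _ ≃ FullFlag P p × FullFlag Q q × LatticePath p q :=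
        ((FullFlag.equivRankedFlag hP hp).prodCongr
          ((FullFlag.equivRankedFlag hQ hq).prodCongr (Equiv.refl _))).symm
  rw [Cardinal.mk_congr flagsEquiv, ← Cardinal.mul_def, ← Cardinal.mul_def,
    LatticePath.mk_eq_choose, mul_assoc]

end FullFlag

/-- Flags of a free sum: if `P ⊆ U` and `Q ⊆ Uᗮ` are polytopes with `0` in their relative
interiors, of dimensions `p` and `q` with `p + q = d`, then
`flags(conv(P ∪ Q)) = flags(P) · flags(Q) · C(d, p)`. -/
theorem stmt_4 {d p q : ℕ} (U : Submodule ℝ (Euc d))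
    (P Q : Set (Euc d)) (hPU : P ⊆ (U : Set (Euc d))) (hQU : Q ⊆ (Uᗮ : Set (Euc d)))
    (hP : IsPolytope P) (hQ : IsPolytope Q)
    (hP0 : (0 : Euc d) ∈ intrinsicInterior ℝ P) (hQ0 : (0 : Euc d) ∈ intrinsicInterior ℝ Q)
    (hpd : sdim P = p) (hqd : sdim Q = q) (hpq : p + q = d) :
    Nat.card (FullFlag (convexHull ℝ (P ∪ Q)) d)
      = Nat.card (FullFlag P p) * Nat.card (FullFlag Q q) * Nat.choose d p := by
  subst hpq
  have h : Disjoint (Submodule.span ℝ P) (Submodule.span ℝ Q) :=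
    U.orthogonal_disjoint.mono (Submodule.span_le.2 hPU) (Submodule.span_le.2 hQU)
  simpa [Nat.card] using congrArg Cardinal.toNat (stmt_4_general h hP0 hQ0 hpd hqd)
end
end

section
/- Let Π_3 be the graph on vertices {1,2,3,4} with edges {1,2}, {2,3}, {3,4}, and let C(Π_3) ⊂ R^4 be the convex hull of the 12 points (±1,±1,0,0), (0,±1,±1,0), (0,0,±1,±1). Then C(Π_3) has exactly 448 full flags; in particular more than 2^4 · 4! = 384. -/
open RealInnerProductSpace

noncomputable section

/-- The vertices `(±1,±1,0,0), (0,±1,±1,0), (0,0,±1,±1)` of `C(Π₃) ⊂ ℝ⁴`. -/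
def piVerts : Set (Euc 4) :=
  {x | ∃ s t : ℝ, (s = 1 ∨ s = -1) ∧ (t = 1 ∨ t = -1) ∧
    (x = s • EuclideanSpace.single 0 (1 : ℝ) + t • EuclideanSpace.single 1 (1 : ℝ) ∨
     x = s • EuclideanSpace.single 1 (1 : ℝ) + t • EuclideanSpace.single 2 (1 : ℝ) ∨
     x = s • EuclideanSpace.single 2 (1 : ℝ) + t • EuclideanSpace.single 3 (1 : ℝ))}

/-!
Let `v` be the vertices of a polytope and `n` a finite set of vectors generating its polar, so that
every vector is a nonnegative combination `∑ k, w k • n k` whose total weight is its maximum on the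
polytope. A vertex attains this maximum iff it is incident to (has inner product `1` with) every
`n k` of positive weight, so the nonempty faces correspond to the nonempty extents of the incidence
relation. As dimensions strictly increase along a chain of faces, a full flag of a `d`-dimensional
polytope is the same as a strict chain of `d` proper faces, and counting full flags becomes a finite
computation.

The polar of `C(Π₃)` is generated by the vectors `±eₐ ± e_b`, where `ab` runs through the edges
`14`, `24`, `13` of the complementary path. Indeed, if `h` bounds `|q₁| + |q₂|`, `|q₂| + |q₃|` and
`|q₃| + |q₄|`, then the nonnegative weights `h - |q₂| - |q₃|`, `|q₂|`, `|q₃|` on these edges have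
total `h`, and at each vertex `i` of the graph they sum to at least `|qᵢ|`.
-/

section ChainCount

variable {α : Type*} [Preorder α] [DecidableLT α]

/-- The number of strictly increasing sequences of length `n` in `S`, by recursion on `n` through
the choice of the first term. -/
def chainCount : ℕ → Finset α → ℕ
  | 0, _ => 1
  | n + 1, S => ∑ x ∈ S, chainCount n {y ∈ S | x < y}

open Classical in
theorem card_filter_strictMono_piFinset (n : ℕ) (S : Finset α) :
    Finset.card {c ∈ Fintype.piFinset fun _ : Fin n => S | StrictMono c} = chainCount n S := by
  induction n generalizing S with
  | zero => simp [chainCount, Subsingleton.strictMono]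
  | succ n ih =>
    simp only [chainCount, ← ih, ← Finset.card_sigma]
    refine Finset.card_nbij' (fun c => ⟨c 0, Fin.tail c⟩) (fun p => Fin.cons p.1 p.2) ?_ ?_
      (fun c _ => Fin.cons_self_tail c) (fun p _ => by simp)
    · intro c hc
      cases c using Fin.consCases with | _ x c
      simp_all [Fin.strictMono_cons, Fin.forall_fin_succ]
    · rintro ⟨x, c⟩ hc
      simp_all [Fin.strictMono_cons, Fin.forall_fin_succ]

theorem card_strictMono (n : ℕ) (S : Finset α) :
    Nat.card {c : Fin n → S // StrictMono c} = chainCount n S := by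
  classical
  rw [← card_filter_strictMono_piFinset, ← Nat.card_eq_finsetCard]
  simp only [Finset.mem_filter, Fintype.mem_piFinset]
  exact Nat.card_congr
    { toFun c := ⟨fun i => c.1 i, fun i => (c.1 i).2, c.2⟩
      invFun c := ⟨fun i => ⟨c.1 i, c.2.1 i⟩, c.2.2⟩ }

end ChainCount

section Extents

variable {ι κ : Type*} [Fintype ι] [DecidableEq ι] (r : ι → κ → Prop) [DecidableRel r]

/-- The extents `Order.lowerPolar r t`, where `t` runs through the sets of entries of a list. -/
def extents : List κ → Finset (Finset ι)
  | [] => {Finset.univ}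
  | k :: l => extents l ∪ (extents l).image fun s => s.filter (r · k)

/-- The extents of `r` other than the empty set and the whole of `ι`, computed from a list
containing all of `κ`. For the incidence relation between the vertices and the facets of a polytope
these are the vertex sets of the nonempty proper faces. -/
def properExtents (l : List κ) : Finset (Finset ι) :=
  {s ∈ extents r l | s.Nonempty ∧ s ≠ Finset.univ}

variable {r}

theorem mem_extents {l : List κ} {s : Finset ι} :
    s ∈ extents r l ↔ ∃ t ⊆ {k | k ∈ l}, lowerPolar r t = s := by
  classical
  induction l generalizing s with
  | nil => simp [extents, ← Finset.coe_inj, eq_comm]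
  | cons k l ih =>
    rw [extents, Finset.mem_union, Finset.mem_image]
    constructor
    · rintro (hs | ⟨s, hs, rfl⟩) <;> obtain ⟨t, ht, hts⟩ := ih.1 hs
      · exact ⟨t, by grind, hts⟩
      · refine ⟨insert k t, by grind, ?_⟩
        ext
        simp [mem_lowerPolar_iff, ← Finset.mem_coe, ← hts, and_comm]
    · rintro ⟨t, ht, hs⟩
      by_cases hk : k ∈ t
      · refine .inr ⟨(lowerPolar r (t \ {k})).toFinset, ih.2 ⟨t \ {k}, by grind, by simp⟩, ?_⟩
        rw [← Finset.coe_inj, ← hs]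
        ext
        simp only [Finset.coe_filter, Set.mem_toFinset, Set.mem_ofPred_eq, mem_lowerPolar_iff]
        grind
      · exact .inl (ih.2 ⟨t, by grind, hs⟩)

theorem mem_properExtents {l : List κ} (hl : ∀ k, k ∈ l) {s : Finset ι} :
    s ∈ properExtents r l ↔ Order.IsExtent r (s : Set ι) ∧ s.Nonempty ∧ s ≠ Finset.univ := by
  simp [properExtents, mem_extents, hl, Order.IsExtent]

/-- The computed `properExtents` are, ordered by inclusion, the nonempty proper extents of `r`. -/
def properExtentsOrderIso {l : List κ} (hl : ∀ k, k ∈ l) :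
    properExtents r l ≃o
      {s : Set ι // Order.IsExtent r s ∧ s.Nonempty ∧ s ≠ Set.univ} where
  toEquiv := Fintype.finsetEquivSet.subtypeEquiv fun s => by
    simp [mem_properExtents hl]
  map_rel_iff' := by simp

end Extents

section ProperFaces

/-- The nonempty proper faces of `P`: its exposed subsets other than `∅` and `P`. -/
def properFaces {E : Type*} [TopologicalSpace E] [AddCommMonoid E] [Module ℝ E] (P : Set E) :
    Set (Set E) :=
  {F | IsExposed ℝ P F ∧ F.Nonempty ∧ F ≠ P}

variable {d : ℕ} {P F G : Set (Euc d)}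

theorem sdim_lt_sdim (hF : IsExposed ℝ P F) (hF₀ : F.Nonempty) (hG : G ⊆ P) (hFG : F ⊂ G) :
    sdim F < sdim G := by
  obtain ⟨l, rfl⟩ := hF hF₀
  obtain ⟨x, hx⟩ := hF₀
  obtain ⟨y, hyG, hyF⟩ := Set.exists_of_ssubset hFG
  have vectorSpan_le_ker : vectorSpan ℝ {x ∈ P | ∀ y ∈ P, l y ≤ l x} ≤ l.ker := by
    rw [vectorSpan, Submodule.span_le]
    rintro _ ⟨a, ha, b, hb, rfl⟩
    simpa [sub_eq_zero] using (hb.2 a ha.1).antisymm (ha.2 b hb.1)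
  refine Submodule.finrank_lt_finrank_of_lt <|
    (vectorSpan_mono ℝ hFG.1).lt_of_not_ge fun hGF => hyF ?_
  have hyx : l y = l x := by
    simpa [sub_eq_zero] using vectorSpan_le_ker (hGF (vsub_mem_vectorSpan ℝ hyG (hFG.1 hx)))
  exact ⟨hG hyG, fun z hz => hyx ▸ hx.2 z hz⟩

theorem sdim_lt_of_mem_properFaces (hF : F ∈ properFaces P) : sdim F < sdim P :=
  sdim_lt_sdim hF.1 hF.2.1 subset_rfl (hF.1.subset.ssubset_of_ne hF.2.2)

theorem strictMono_sdim : StrictMono fun F : properFaces P => sdim F.1 :=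
  fun F G hFG => sdim_lt_sdim F.2.1 F.2.2.1 G.2.1.subset hFG

theorem sdim_eq_of_strictMono {c : Fin (sdim P) → properFaces P} (hc : StrictMono c)
    (i : Fin (sdim P)) : sdim (c i).1 = i := by
  let dim (j : Fin (sdim P)) : Fin (sdim P) := ⟨_, sdim_lt_of_mem_properFaces (c j).2⟩
  have dim_strictMono : StrictMono dim := strictMono_sdim.comp hc
  exact congrArg Fin.val (dim_strictMono.apply_le.antisymm dim_strictMono.le_apply)

namespace FullFlag

@[ext]
theorem ext {k : ℕ} {f g : FullFlag P k} (h : ∀ i < k, f.face i = g.face i) : f = g := by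
  have face_eq : f.face = g.face := funext fun i =>
    (lt_or_ge i k).elim (h i) fun hi => (f.top i hi).trans (g.top i hi).symm
  cases f; cases g; congr

theorem face_mem_properFaces (f : FullFlag P (sdim P)) (i : Fin (sdim P)) :
    f.face i ∈ properFaces P :=
  ⟨f.exposed i i.2, f.nonempty i i.2, fun h => i.2.ne (h ▸ f.dim_eq i i.2).symm⟩

theorem face_strictMono (f : FullFlag P (sdim P)) :
    StrictMono fun i : Fin (sdim P) => (⟨f.face i, f.face_mem_properFaces i⟩ : properFaces P) :=
  fun i j hij => (f.chain i j hij j.2).ssubset_of_ne fun h =>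
    hij.ne (Fin.ext (by rw [← f.dim_eq i i.2, ← f.dim_eq j j.2, h]))

/-- Along a chain of `sdim P` proper faces the dimensions are forced to be `0, …, sdim P - 1`. -/
def equivStrictMono :
    FullFlag P (sdim P) ≃ {c : Fin (sdim P) → properFaces P // StrictMono c} where
  toFun f := ⟨_, f.face_strictMono⟩
  invFun c :=
    { face i := if h : i < sdim P then c.1 ⟨i, h⟩ else P
      exposed i hi := by simpa [hi] using (c.1 ⟨i, hi⟩).2.1
      nonempty i hi := by simpa [hi] using (c.1 ⟨i, hi⟩).2.2.1
      dim_eq i hi := by simpa [hi] using sdim_eq_of_strictMono c.2 ⟨i, hi⟩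
      chain i j hij hj := by
        simpa [hj, hij.trans hj] using c.2.monotone (Fin.mk_le_mk (hx := hij.trans hj).2 hij.le)
      top i hi := by simp [hi.not_gt] }
  left_inv f := FullFlag.ext fun i hi => by simp [hi]
  right_inv c := by ext; simp

end FullFlag

end ProperFaces

section ConvexHullRange

variable {ι E : Type*} [AddCommGroup E] [Module ℝ E] [TopologicalSpace E] {v : ι → E}

theorem mem_toExposed_convexHull_range {l : StrongDual ℝ E} {j : ι} :
    v j ∈ l.toExposed (convexHull ℝ (Set.range v)) ↔ ∀ i, l (v i) ≤ l (v j) := by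
  refine ⟨fun hj i => hj.2 _ (subset_convexHull ℝ _ ⟨i, rfl⟩), fun hj =>
    ⟨subset_convexHull ℝ _ ⟨j, rfl⟩, fun x hx => ?_⟩⟩
  exact convexHull_min (Set.range_subset_iff.2 hj) (convex_halfSpace_le l.isLinear (l (v j))) hx

variable [Finite ι] [T2Space E] [IsTopologicalAddGroup E] [ContinuousSMul ℝ E]
  [LocallyConvexSpace ℝ E] {F G : Set E}

-- By Krein–Milman an exposed face is the closed hull of its extreme points, all in `range v`.
theorem subset_iff_preimage_subset_of_isExposed
    (hF : IsExposed ℝ (convexHull ℝ (Set.range v)) F)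
    (hG : IsExposed ℝ (convexHull ℝ (Set.range v)) G) : F ⊆ G ↔ v ⁻¹' F ⊆ v ⁻¹' G := by
  refine ⟨fun h => Set.preimage_mono h, fun h => ?_⟩
  have convex_hull := convex_convexHull ℝ (Set.range v)
  have isCompact_hull := (Set.finite_range v).isCompact_convexHull (𝕜 := ℝ)
  rw [← closure_convexHull_extremePoints (hF.isCompact isCompact_hull) (hF.convex convex_hull)]
  refine closure_minimal (convexHull_min (fun x hx => ?_) (hG.convex convex_hull))
    (hG.isClosed isCompact_hull.isClosed)
  obtain ⟨i, rfl⟩ := extremePoints_convexHull_subset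
    (hF.isExtreme.extremePoints_subset_extremePoints hx)
  exact h (extremePoints_subset hx : v i ∈ F)

theorem nonempty_iff_preimage_nonempty_of_isExposed
    (hF : IsExposed ℝ (convexHull ℝ (Set.range v)) F) : F.Nonempty ↔ (v ⁻¹' F).Nonempty := by
  rw [← not_iff_not, Set.not_nonempty_iff_eq_empty, Set.not_nonempty_iff_eq_empty,
    ← Set.subset_empty_iff, ← Set.subset_empty_iff,
    subset_iff_preimage_subset_of_isExposed hF isExposed_empty, Set.preimage_empty]

theorem eq_convexHull_iff_preimage_eq_univ_of_isExposed
    (hF : IsExposed ℝ (convexHull ℝ (Set.range v)) F) :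
    F = convexHull ℝ (Set.range v) ↔ v ⁻¹' F = Set.univ := by
  have preimage_hull : v ⁻¹' convexHull ℝ (Set.range v) = Set.univ :=
    Set.eq_univ_of_forall fun i => subset_convexHull ℝ _ ⟨i, rfl⟩
  rw [← hF.subset.ge_iff_eq, ← Set.univ_subset_iff, ← preimage_hull]
  exact subset_iff_preimage_subset_of_isExposed (IsExposed.refl _) hF

end ConvexHullRange

section PolarSystem

variable {ι κ E : Type*} [Fintype κ] [NormedAddCommGroup E] [InnerProductSpace ℝ E]

/-- `n` is a system of outer normals for the points `v`: the inequalities `⟪n k, x⟫ ≤ 1` hold at all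
points `v i`, and every `q` is a nonnegative combination of the `n k` whose total weight is the
maximum of `⟪q, v i⟫`. In other words, the `n k` generate the polar of the convex hull of `v`. -/
structure IsPolarSystem (v : ι → E) (n : κ → E) : Prop where
  inner_le_one : ∀ k i, ⟪n k, v i⟫ ≤ 1
  exists_combination : ∀ q, ∃ w : κ → ℝ, (∀ k, 0 ≤ w k) ∧ ∑ k, w k • n k = q ∧
    ∃ i, ∑ k, w k ≤ ⟪q, v i⟫

/-- The point `v i` lies on the supporting hyperplane `⟪n k, x⟫ = 1`. -/
def Incident (v : ι → E) (n : κ → E) (i : ι) (k : κ) : Prop :=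
  ⟪n k, v i⟫ = 1

namespace IsPolarSystem

variable {v : ι → E} {n : κ → E}

theorem inner_combination_eq_iff (h : IsPolarSystem v n) {w : κ → ℝ} (hw : ∀ k, 0 ≤ w k) (j : ι) :
    ⟪∑ k, w k • n k, v j⟫ = ∑ k, w k ↔ j ∈ lowerPolar (Incident v n) {k | 0 < w k} := by
  have term_le (k : κ) (_ : k ∈ Finset.univ) : w k * ⟪n k, v j⟫ ≤ w k :=
    mul_le_of_le_one_right (hw k) (h.inner_le_one k j)
  simp only [sum_inner, real_inner_smul_left, Finset.sum_eq_sum_iff_of_le term_le,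
    mem_lowerPolar_iff, Set.mem_ofPred_eq, Incident, mul_right_eq_self₀,
    Finset.mem_univ, true_imp_iff, (hw _).lt_iff_ne', or_iff_not_imp_right, ne_eq]

theorem inner_combination_le (h : IsPolarSystem v n) {w : κ → ℝ} (hw : ∀ k, 0 ≤ w k) (j : ι) :
    ⟪∑ k, w k • n k, v j⟫ ≤ ∑ k, w k := by
  simp only [sum_inner, real_inner_smul_left]
  exact Finset.sum_le_sum fun k _ => mul_le_of_le_one_right (hw k) (h.inner_le_one k j)

theorem vectorSpan_range_eq_top [Finite ι] (h : IsPolarSystem v n) :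
    vectorSpan ℝ (Set.range v) = ⊤ := by
  rw [← Submodule.orthogonal_eq_bot_iff, Submodule.eq_bot_iff]
  intro q hq
  obtain ⟨w, hw, hwq, i, hi⟩ := h.exists_combination q
  obtain ⟨w', hw', -, j, hj⟩ := h.exists_combination (-q)
  have inner_eq : ⟪q, v i⟫ = ⟪q, v j⟫ := by
    rw [← sub_eq_zero, ← inner_sub_right, real_inner_comm]
    exact hq _ (vsub_mem_vectorSpan ℝ ⟨i, rfl⟩ ⟨j, rfl⟩)
  rw [inner_neg_left] at hj
  have w_eq_zero : ∑ k, w k = 0 := by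
    linarith [Finset.sum_nonneg fun k (_ : k ∈ Finset.univ) => hw k,
      Finset.sum_nonneg fun k (_ : k ∈ Finset.univ) => hw' k]
  rw [Finset.sum_eq_zero_iff_of_nonneg fun k _ => hw k] at w_eq_zero
  simp [← hwq, w_eq_zero]

variable [CompleteSpace E]

theorem preimage_toExposed_combination (h : IsPolarSystem v n) {w : κ → ℝ} (hw : ∀ k, 0 ≤ w k)
    (hv : ∃ i, ∑ k, w k ≤ ⟪∑ k, w k • n k, v i⟫) :
    v ⁻¹' (InnerProductSpace.toDual ℝ E (∑ k, w k • n k)).toExposed (convexHull ℝ (Set.range v)) =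
      lowerPolar (Incident v n) {k | 0 < w k} := by
  ext j
  obtain ⟨i, hi⟩ := hv
  rw [Set.mem_preimage, mem_toExposed_convexHull_range, ← h.inner_combination_eq_iff hw]
  exact ⟨fun hj => (h.inner_combination_le hw j).antisymm (hi.trans (hj i)),
    fun hj i => (h.inner_combination_le hw i).trans_eq hj.symm⟩

theorem isExtent_preimage (h : IsPolarSystem v n) {F : Set E}
    (hF : IsExposed ℝ (convexHull ℝ (Set.range v)) F) (hF₀ : F.Nonempty) :
    Order.IsExtent (Incident v n) (v ⁻¹' F) := by
  obtain ⟨l, rfl⟩ := hF hF₀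
  obtain ⟨q, rfl⟩ := (InnerProductSpace.toDual ℝ E).surjective l
  obtain ⟨w, hw, rfl, hv⟩ := h.exists_combination q
  exact ⟨_, (h.preimage_toExposed_combination hw hv).symm⟩

theorem exists_isExposed_preimage_eq (h : IsPolarSystem v n) {s : Set ι}
    (hs : Order.IsExtent (Incident v n) s) (hs₀ : s.Nonempty) :
    ∃ F, IsExposed ℝ (convexHull ℝ (Set.range v)) F ∧ v ⁻¹' F = s := by
  classical
  obtain ⟨t, rfl⟩ := hs
  obtain ⟨j, hj⟩ := hs₀
  let w (k : κ) : ℝ := if k ∈ t then 1 else 0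
  have w_nonneg (k : κ) : 0 ≤ w k := by positivity
  have setOf_w_pos : {k | 0 < w k} = t := by ext k; by_cases hk : k ∈ t <;> simp [w, hk]
  have preimage_eq := h.preimage_toExposed_combination w_nonneg
    ⟨j, ((h.inner_combination_eq_iff w_nonneg j).2 (by rwa [setOf_w_pos])).ge⟩
  exact ⟨_, ContinuousLinearMap.toExposed.isExposed, setOf_w_pos ▸ preimage_eq⟩

/-- Passing to vertex sets identifies the nonempty proper faces with the nonempty proper extents. -/
def faceOrderIso [Finite ι] (h : IsPolarSystem v n) :
    properFaces (convexHull ℝ (Set.range v)) ≃o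
      {s : Set ι // Order.IsExtent (Incident v n) s ∧ s.Nonempty ∧ s ≠ Set.univ} :=
  RelIso.ofSurjective
    (OrderEmbedding.ofMapLEIff
      (fun F => ⟨v ⁻¹' F.1, h.isExtent_preimage F.2.1 F.2.2.1,
        (nonempty_iff_preimage_nonempty_of_isExposed F.2.1).1 F.2.2.1,
        (eq_convexHull_iff_preimage_eq_univ_of_isExposed F.2.1).not.1 F.2.2.2⟩)
      fun F G => (subset_iff_preimage_subset_of_isExposed F.2.1 G.2.1).symm)
    fun ⟨s, hs, hs₀, hs₁⟩ => by
      obtain ⟨F, hF, rfl⟩ := h.exists_isExposed_preimage_eq hs hs₀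
      exact ⟨⟨F, hF, (nonempty_iff_preimage_nonempty_of_isExposed hF).2 hs₀,
        (eq_convexHull_iff_preimage_eq_univ_of_isExposed hF).not.2 hs₁⟩, rfl⟩

theorem sdim_convexHull_range [Finite ι] {d : ℕ} {v : ι → Euc d} {n : κ → Euc d}
    (h : IsPolarSystem v n) : sdim (convexHull ℝ (Set.range v)) = d := by
  rw [sdim, ← direction_affineSpan, affineSpan_convexHull, direction_affineSpan,
    h.vectorSpan_range_eq_top, finrank_top, finrank_euclideanSpace_fin]

theorem card_fullFlag [Fintype ι] [DecidableEq ι] {d : ℕ} {v : ι → Euc d} {n : κ → Euc d}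
    [DecidableRel (Incident v n)] (h : IsPolarSystem v n) {l : List κ} (hl : ∀ k, k ∈ l) :
    Nat.card (FullFlag (convexHull ℝ (Set.range v)) d) =
      chainCount d (properExtents (Incident v n) l) := by
  set P := convexHull ℝ (Set.range v)
  let e : properFaces P ≃o properExtents (Incident v n) l :=
    h.faceOrderIso.trans (properExtentsOrderIso hl).symm
  have card_fullFlag_sdim : Nat.card (FullFlag P (sdim P)) =
      chainCount (sdim P) (properExtents (Incident v n) l) := by
    rw [← card_strictMono]
    exact Nat.card_congr <| FullFlag.equivStrictMono.trans <|
      (Equiv.arrowCongr (.refl _) e.toEquiv).subtypeEquiv fun c => by simp [StrictMono]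
  rwa [h.sdim_convexHull_range] at card_fullFlag_sdim

end IsPolarSystem

end PolarSystem

section SignWeight

/-- The probability of the sign `s` for a random sign of mean `μ ∈ [-1, 1]`. -/
def signWeight (μ : ℝ) (s : ℤˣ) : ℝ :=
  (1 + (s : ℤ) * μ) / 2

variable {μ : ℝ}

theorem signWeight_nonneg (hμ : |μ| ≤ 1) (s : ℤˣ) : 0 ≤ signWeight μ s := by
  have abs_mul_eq : |(s : ℤ) * μ| = |μ| := by
    rcases Int.units_eq_one_or s with rfl | rfl <;> simp
  have neg_one_le : -1 ≤ (s : ℤ) * μ := (abs_le.1 (abs_mul_eq.trans_le hμ)).1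
  unfold signWeight
  linarith

theorem sum_intUnits {M : Type*} [AddCommMonoid M] (f : ℤˣ → M) : ∑ s, f s = f 1 + f (-1) :=
  Finset.sum_pair (by decide)

theorem sum_signWeight : ∑ s, signWeight μ s = 1 := by
  simp only [sum_intUnits, signWeight, Units.val_one, Units.val_neg, Int.cast_one, Int.cast_neg]
  ring

theorem sum_signWeight_smul {E : Type*} [AddCommGroup E] [Module ℝ E] (μ ν : ℝ) (x y : E) :
    ∑ s : ℤˣ, ∑ t : ℤˣ,
      (signWeight μ s * signWeight ν t) • (((s : ℤ) : ℝ) • x + ((t : ℤ) : ℝ) • y) =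
        μ • x + ν • y := by
  simp only [sum_intUnits, signWeight, Units.val_one, Units.val_neg, Int.cast_one, Int.cast_neg]
  module

end SignWeight

section SignedEdges

variable {κ : Type*} {d : ℕ}

/-- The vectors `±eₐ ± e_b`, where `(a, b)` runs through a family of pairs of coordinates. -/
def signedEdge (e : κ → Fin d × Fin d) (p : κ × ℤˣ × ℤˣ) : Fin d → ℤ :=
  Pi.single (e p.1).1 (p.2.1 : ℤ) + Pi.single (e p.1).2 (p.2.2 : ℤ)

/-- An integer vector as a point of Euclidean space. -/
def intVector (z : Fin d → ℤ) : Euc d :=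
  WithLp.toLp 2 fun i => (z i : ℝ)

theorem inner_intVector (y z : Fin d → ℤ) : ⟪intVector y, intVector z⟫ = (y ⬝ᵥ z : ℤ) := by
  simp [intVector, PiLp.inner_apply, dotProduct, mul_comm]

theorem intVector_signedEdge (e : κ → Fin d × Fin d) (p : κ × ℤˣ × ℤˣ) :
    intVector (signedEdge e p) =
      ((p.2.1 : ℤ) : ℝ) • EuclideanSpace.single (e p.1).1 (1 : ℝ) +
        ((p.2.2 : ℤ) : ℝ) • EuclideanSpace.single (e p.1).2 (1 : ℝ) := by
  ext i
  simp [intVector, signedEdge, Pi.single_apply]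

theorem inner_intVector_signedEdge (q : Euc d) (e : κ → Fin d × Fin d) (p : κ × ℤˣ × ℤˣ) :
    ⟪q, intVector (signedEdge e p)⟫ =
      (p.2.1 : ℤ) * q (e p.1).1 + (p.2.2 : ℤ) * q (e p.1).2 := by
  simp [intVector_signedEdge, inner_add_right, real_inner_smul_right,
    EuclideanSpace.inner_single_right]

theorem exists_abs_le_one_mul_eq {a b : ℝ} (h : |a| ≤ b) : ∃ μ, |μ| ≤ 1 ∧ μ * b = a := by
  have b_nonneg : 0 ≤ b := (abs_nonneg a).trans h
  refine ⟨a / b, ?_, div_mul_cancel_of_imp fun b_eq_zero => ?_⟩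
  · rw [abs_div, abs_of_nonneg b_nonneg]
    exact div_le_one_of_le₀ h b_nonneg
  · simpa [b_eq_zero] using h

-- Each weight `x k` is distributed over the four sign patterns of its pair as by independent random
-- signs, the mean `μ i` at the coordinate `i` being chosen so that the combination is `q`.
theorem exists_signed_weights [Fintype κ] (e : κ → Fin d × Fin d) {x : κ → ℝ}
    (hx : ∀ k, 0 ≤ x k) {q : Euc d}
    (hq : ∀ i, |q i| ≤
      ∑ k, x k * (Pi.single (e k).1 1 + Pi.single (e k).2 1 : Fin d → ℝ) i) :
    ∃ w : κ × ℤˣ × ℤˣ → ℝ, (∀ p, 0 ≤ w p) ∧ ∑ p, w p • intVector (signedEdge e p) = q ∧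
      ∑ p, w p = ∑ k, x k := by
  choose μ abs_μ hμ using fun i => exists_abs_le_one_mul_eq (hq i)
  refine ⟨fun p => x p.1 * (signWeight (μ (e p.1).1) p.2.1 * signWeight (μ (e p.1).2) p.2.2),
    fun p => ?_, ?_, ?_⟩
  · have weight_nonneg (i : Fin d) (s : ℤˣ) := signWeight_nonneg (abs_μ i) s
    exact mul_nonneg (hx _) (mul_nonneg (weight_nonneg _ _) (weight_nonneg _ _))
  · calc
      _ = ∑ k, x k • ∑ s : ℤˣ, ∑ t : ℤˣ, (signWeight (μ (e k).1) s * signWeight (μ (e k).2) t) •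
          (((s : ℤ) : ℝ) • EuclideanSpace.single (e k).1 (1 : ℝ) +
            ((t : ℤ) : ℝ) • EuclideanSpace.single (e k).2 (1 : ℝ)) := by
        simp only [Fintype.sum_prod_type, Finset.smul_sum, smul_smul, intVector_signedEdge]
      _ = ∑ k, x k • (μ (e k).1 • EuclideanSpace.single (e k).1 (1 : ℝ) +
          μ (e k).2 • EuclideanSpace.single (e k).2 (1 : ℝ)) := by
        simp only [sum_signWeight_smul]
      _ = q := by
        ext i
        have mean_mul_single (j : Fin d) :
            μ j * (Pi.single j 1 : Fin d → ℝ) i = μ i * (Pi.single j 1 : Fin d → ℝ) i := by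
          by_cases h : i = j <;> simp [h]
        rw [← hμ, Finset.mul_sum, WithLp.ofLp_sum, Finset.sum_apply]
        refine Finset.sum_congr rfl fun k _ => ?_
        change x k * (μ (e k).1 * (Pi.single (e k).1 1 : Fin d → ℝ) i +
          μ (e k).2 * (Pi.single (e k).2 1 : Fin d → ℝ) i) = μ i * (x k * (_ + _))
        rw [mean_mul_single, mean_mul_single]
        ring
  · simp only [Fintype.sum_prod_type, ← Finset.mul_sum, sum_signWeight, mul_one]

end SignedEdges

section PathOnFourVertices

/-- The edges of the path graph `Π₃`. -/
def pathEdge (k : Fin 3) : Fin 4 × Fin 4 :=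
  (k.castSucc, k.succ)

/-- The edges of the complement of `Π₃`, which is again a path. -/
def complEdge : Fin 3 → Fin 4 × Fin 4 :=
  ![(0, 3), (1, 3), (0, 2)]

/-- The vertices of `C(Π₃)`. -/
def piVertex (p : Fin 3 × ℤˣ × ℤˣ) : Euc 4 :=
  intVector (signedEdge pathEdge p)

/-- The outer facet normals of `C(Π₃)`. -/
def piNormal (p : Fin 3 × ℤˣ × ℤˣ) : Euc 4 :=
  intVector (signedEdge complEdge p)

/-- All indices of the vertices and of the facet normals, listed for kernel evaluation. -/
def signedIndices : List (Fin 3 × ℤˣ × ℤˣ) :=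
  List.finRange 3 ×ˢ [1, -1] ×ˢ [1, -1]

theorem mem_signedIndices (p : Fin 3 × ℤˣ × ℤˣ) : p ∈ signedIndices := by
  revert p
  decide

theorem exists_unit_mul_eq_abs (x : ℝ) : ∃ s : ℤˣ, (s : ℤ) * x = |x| := by
  rcases abs_choice x with h | h
  · exact ⟨1, by simp [h]⟩
  · exact ⟨-1, by simp [h]⟩

theorem range_piVertex : Set.range piVertex = piVerts := by
  have eq_one_or_neg_one_iff (x : ℝ) : x = 1 ∨ x = -1 ↔ ∃ s : ℤˣ, ((s : ℤ) : ℝ) = x := by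
    constructor
    · rintro (rfl | rfl)
      exacts [⟨1, by simp⟩, ⟨-1, by simp⟩]
    · rintro ⟨s, rfl⟩
      rcases Int.units_eq_one_or s with rfl | rfl <;> simp
  ext y
  simp only [piVerts, eq_one_or_neg_one_iff]
  constructor
  · rintro ⟨⟨k, s, t⟩, rfl⟩
    refine ⟨_, _, ⟨s, rfl⟩, ⟨t, rfl⟩, ?_⟩
    rw [piVertex, intVector_signedEdge]
    fin_cases k
    exacts [.inl rfl, .inr (.inl rfl), .inr (.inr rfl)]
  · rintro ⟨_, _, ⟨s, rfl⟩, ⟨t, rfl⟩, rfl | rfl | rfl⟩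
    exacts [⟨(0, s, t), intVector_signedEdge ..⟩, ⟨(1, s, t), intVector_signedEdge ..⟩,
      ⟨(2, s, t), intVector_signedEdge ..⟩]

theorem isPolarSystem_piVertex_piNormal : IsPolarSystem piVertex piNormal where
  inner_le_one := by
    simp only [piVertex, piNormal, inner_intVector]
    exact_mod_cast (by decide +kernel :
      ∀ k i, signedEdge complEdge k ⬝ᵥ signedEdge pathEdge i ≤ 1)
  exists_combination q := by
    obtain ⟨i, hi⟩ := Finite.exists_max fun i => ⟪q, piVertex i⟫
    have abs_add_abs_le (k : Fin 3) : |q k.castSucc| + |q k.succ| ≤ ⟪q, piVertex i⟫ := by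
      obtain ⟨s, hs⟩ := exists_unit_mul_eq_abs (q k.castSucc)
      obtain ⟨t, ht⟩ := exists_unit_mul_eq_abs (q k.succ)
      rw [← hs, ← ht]
      exact (inner_intVector_signedEdge q pathEdge (k, s, t)).symm.trans_le (hi (k, s, t))
    let x : Fin 3 → ℝ := ![⟪q, piVertex i⟫ - |q 1| - |q 2|, |q 1|, |q 2|]
    have h₀ : |q 0| + |q 1| ≤ ⟪q, piVertex i⟫ := abs_add_abs_le 0
    have h₁ : |q 1| + |q 2| ≤ ⟪q, piVertex i⟫ := abs_add_abs_le 1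
    have h₂ : |q 2| + |q 3| ≤ ⟪q, piVertex i⟫ := abs_add_abs_le 2
    have x_nonneg : ∀ k, 0 ≤ x k := by
      simpa [x, Fin.forall_fin_succ, sub_sub] using h₁
    have abs_le_cover (j : Fin 4) : |q j| ≤ ∑ k, x k *
        (Pi.single (complEdge k).1 1 + Pi.single (complEdge k).2 1 : Fin 4 → ℝ) j := by
      rw [Fin.sum_univ_three]
      fin_cases j <;> simp [x, complEdge] <;> linarith
    obtain ⟨w, hw, hwq, sum_w⟩ := exists_signed_weights complEdge x_nonneg abs_le_cover
    have sum_x : ∑ k, x k = ⟪q, piVertex i⟫ := by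
      rw [Fin.sum_univ_three]
      exact (by ring : ⟪q, piVertex i⟫ - |q 1| - |q 2| + |q 1| + |q 2| = _)
    exact ⟨w, hw, hwq, i, (sum_w.trans sum_x).le⟩

instance : DecidableRel (Incident piVertex piNormal) := fun i k =>
  decidable_of_iff (signedEdge complEdge k ⬝ᵥ signedEdge pathEdge i = 1) <| by
    rw [Incident, piVertex, piNormal, inner_intVector, Int.cast_eq_one]

theorem chainCount_properExtents_piVertex :
    chainCount 4 (properExtents (Incident piVertex piNormal) signedIndices) = 448 := by
  decide +kernel

end PathOnFourVertices

/-- `C(Π₃)` has exactly `448` full flags; in particular more than `2^4 · 4! = 384`. -/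
theorem stmt_18 :
    Nat.card (FullFlag (convexHull ℝ piVerts) 4) = 448 ∧
      2 ^ 4 * Nat.factorial 4 < 448 := by
  rw [← range_piVertex, isPolarSystem_piVertex_piNormal.card_fullFlag mem_signedIndices,
    chainCount_properExtents_piVertex]
  exact ⟨rfl, by decide⟩
end
end
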